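/- arXiv:2204.04989 — 2 statements merged into one kernel-verified Lean document; each statement's English description precedes it below -/
import Mathlib

section
/- Let Ω ⊆ ℝ^d be open and let f : Ω × ℝ^d → [0,∞) be convex and positively 1-homogeneous in its second variable (f(x, sξ) = s f(x,ξ) for all s > 0). Fix a nonnegative function α ∈ C_c^1(ℝ^d) with ∫_{ℝ^d} α(ξ) dξ = 1, set α_{j,q}(ξ) := j^d α(j(q − ξ)) for j ∈ ℕ, j ≥ 1, q ∈ ℚ^d, and define a_{j,q}(x) := −∫_{ℝ^d} f(x,ξ) ∇α_{j,q}(ξ) dξ. Then for every (x,ξ) ∈ Ω × ℝ^d one has f(x,ξ) = sup_{j ∈ ℕ, q ∈ ℚ^d} max(⟨a_{j,q}(x), ξ⟩, 0). -/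
open MeasureTheory
open scoped RealInnerProductSpace

/-!
Integration by parts turns `⟪a, ξ⟫`, where `a = -∫ g ∇β`, into the `β`-weighted mean of the
directional derivatives `∂_ξ g(η)`, which exist for almost every `η` because a finite sublinear `g`
is Lipschitz. Convexity bounds them from both sides by difference quotients,
`g η - g (η - ξ) ≤ ∂_ξ g(η) ≤ g (η + ξ) - g η`. By subadditivity the right-hand side is at most
`g ξ`, so `⟪a, ξ⟫ ≤ g ξ`. By continuity and `g 0 = 0` the left-hand side tends to `g ξ` as `η → ξ`,
so the bound is approached by mollifiers `β` concentrating at `ξ`.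
-/

open Function Metric Module Set Topology

section Sublinear

variable {E : Type*}

lemma lineDeriv_le_sub_of_convexOn [AddCommGroup E] [Module ℝ E] {g : E → ℝ} {x v : E}
    (hg : ConvexOn ℝ univ g) (hd : LineDifferentiableAt ℝ g x v) :
    lineDeriv ℝ g x v ≤ g (x + v) - g x := by
  have hconv : ConvexOn ℝ univ fun t : ℝ => g (x + t • v) := by
    simpa [comp_def, AffineMap.lineMap_apply, add_comm] using
      hg.comp_affineMap (AffineMap.lineMap x (x + v))
  simpa [lineDeriv, slope_def_field] using
    hconv.deriv_le_slope (mem_univ 0) (mem_univ 1) zero_lt_one hd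

/-- A sublinear function: convex and positively `1`-homogeneous. Homogeneity is required for
positive factors only; the value `0` at the origin follows. -/
structure IsSublinear [AddCommGroup E] [Module ℝ E] (g : E → ℝ) : Prop where
  convexOn : ConvexOn ℝ univ g
  map_smul : ∀ s : ℝ, 0 < s → ∀ x, g (s • x) = s * g x

namespace IsSublinear

section Module

variable [AddCommGroup E] [Module ℝ E] {g : E → ℝ}

lemma map_zero (hg : IsSublinear g) : g 0 = 0 := by
  have h := hg.map_smul 2 two_pos 0
  rw [smul_zero] at h
  linarith

lemma map_add_le (hg : IsSublinear g) (x y : E) : g (x + y) ≤ g x + g y := by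
  have h := hg.convexOn.2 (mem_univ x) (mem_univ y) (one_half_pos (α := ℝ)).le one_half_pos.le
    (add_halves 1)
  rw [← smul_add, hg.map_smul _ (by norm_num), smul_eq_mul, smul_eq_mul] at h
  linarith

end Module

variable [NormedAddCommGroup E] [NormedSpace ℝ E] [FiniteDimensional ℝ E] {g : E → ℝ}

lemma continuous (hg : IsSublinear g) : Continuous g :=
  hg.convexOn.locallyLipschitz.continuous

/-- Homogeneity scales the Lipschitz estimate near the origin up to the whole space. -/
lemma exists_lipschitzWith (hg : IsSublinear g) : ∃ C, LipschitzWith C g := by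
  obtain ⟨C, U, hU, hCU⟩ := hg.convexOn.locallyLipschitz 0
  refine ⟨C, LipschitzWith.of_dist_le_mul fun x y => ?_⟩
  have eventually_smul_mem (z : E) : ∀ᶠ s : ℝ in 𝓝[>] 0, s • z ∈ U :=
    (tendsto_nhdsWithin_of_tendsto_nhds
      (Continuous.tendsto' (by fun_prop) 0 0 (zero_smul ℝ z))).eventually_mem hU
  obtain ⟨s, ⟨hsx, hsy⟩, hs⟩ :=
    ((eventually_smul_mem x).and (eventually_smul_mem y) |>.and self_mem_nhdsWithin).exists
  have hs : 0 < s := hs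
  have h := hCU.dist_le_mul _ hsx _ hsy
  rw [hg.map_smul s hs, hg.map_smul s hs, ← smul_eq_mul, ← smul_eq_mul, dist_smul₀, dist_smul₀,
    Real.norm_of_nonneg hs.le, mul_left_comm] at h
  exact le_of_mul_le_mul_left h hs

lemma setOf_lt_sub_mem_nhds (hg : IsSublinear g) {ξ : E} {c : ℝ} (hc : c < g ξ) :
    {x | c < g x - g (x - ξ)} ∈ 𝓝 ξ := by
  have hcont : Continuous fun x => g x - g (x - ξ) :=
    hg.continuous.sub (hg.continuous.comp (continuous_id.sub continuous_const))
  exact hcont.continuousAt.eventually_const_lt (by simpa [hg.map_zero] using hc)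

end IsSublinear

end Sublinear

section Mollifier

variable {E : Type*} [NormedAddCommGroup E] [NormedSpace ℝ E]

/-- The weight `α_{t,p}` obtained from `α` by reflecting it, contracting it by the factor `t` and
recentring it at `p`, with the mass preserved. -/
noncomputable def rescaleAt (α : E → ℝ) (t : ℝ) (p : E) : E → ℝ :=
  fun x => t ^ finrank ℝ E * α (t • (p - x))

lemma support_rescaleAt_subset_ball {α : E → ℝ} {t R : ℝ} (ht : 0 < t)
    (hα : support α ⊆ ball 0 R) (p : E) : support (rescaleAt α t p) ⊆ ball p (R / t) := by
  intro x hx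
  have hαx : t • (p - x) ∈ ball 0 R := hα (right_ne_zero_of_mul hx)
  rwa [mem_ball_zero_iff, norm_smul, Real.norm_of_nonneg ht.le, ← dist_eq_norm, dist_comm,
    ← lt_div_iff₀' ht] at hαx

lemma exists_support_rescaleAt_subset {ι : Type*} {p : ι → E} (hp : DenseRange p) {α : E → ℝ}
    (hα : HasCompactSupport α) {x : E} {s : Set E} (hs : s ∈ 𝓝 x) :
    ∃ j : ℕ, 1 ≤ j ∧ ∃ i, support (rescaleAt α j (p i)) ⊆ s := by
  obtain ⟨ε, hε, hεs⟩ := Metric.mem_nhds_iff.1 hs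
  obtain ⟨R, hR, hαR⟩ := hα.isBounded.subset_ball_lt 0 0
  obtain ⟨i, hi⟩ := hp.exists_dist_lt x (half_pos hε)
  obtain ⟨j, hj⟩ := exists_nat_gt (R / (ε / 2))
  have hj_pos : (0 : ℝ) < j := (by positivity : 0 < R / (ε / 2)).trans hj
  have hRj : R / j < ε / 2 := (div_lt_comm₀ (half_pos hε) hj_pos).1 hj
  refine ⟨j, Nat.cast_pos.1 hj_pos, i, ?_⟩
  calc support (rescaleAt α j (p i))
      ⊆ ball (p i) (R / j) :=
        support_rescaleAt_subset_ball hj_pos ((subset_tsupport α).trans hαR) _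
    _ ⊆ ball x ε := ball_subset_ball' (by rw [dist_comm]; linarith)
    _ ⊆ s := hεs

variable [MeasurableSpace E]

/-- A nonnegative, compactly supported `C¹` weight of total mass one. -/
structure IsMollifier (μ : Measure E) (β : E → ℝ) : Prop where
  contDiff : ContDiff ℝ 1 β
  hasCompactSupport : HasCompactSupport β
  nonneg : ∀ x, 0 ≤ β x
  integral_eq_one : ∫ x, β x ∂μ = 1

variable [BorelSpace E] [FiniteDimensional ℝ E] {μ : Measure E} [μ.IsAddHaarMeasure]

lemma integral_rescaleAt (α : E → ℝ) {t : ℝ} (ht : 0 < t) (p : E) :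
    ∫ x, rescaleAt α t p x ∂μ = ∫ x, α x ∂μ := by
  simp only [rescaleAt]
  rw [integral_const_mul, integral_sub_left_eq_self (fun x => α (t • x)),
    Measure.integral_comp_smul_of_nonneg μ α t (hR := ht.le), smul_eq_mul,
    mul_inv_cancel_left₀ (pow_ne_zero _ ht.ne')]

lemma IsMollifier.rescaleAt {α : E → ℝ} (hα : IsMollifier μ α) {t : ℝ} (ht : 0 < t) (p : E) :
    IsMollifier μ (rescaleAt α t p) where
  contDiff := contDiff_const.mul (hα.contDiff.comp (by fun_prop))
  hasCompactSupport := (hα.hasCompactSupport.comp_homeomorph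
    ((Homeomorph.subLeft p).trans (Homeomorph.smulOfNeZero t ht.ne'))).mul_left
  nonneg x := mul_nonneg (by positivity) (hα.nonneg _)
  integral_eq_one := (integral_rescaleAt α ht p).trans hα.integral_eq_one

end Mollifier

section DeGiorgi

variable {E : Type*} [NormedAddCommGroup E] [InnerProductSpace ℝ E] [FiniteDimensional ℝ E]
  [MeasurableSpace E] [BorelSpace E] {μ : Measure E} {g β : E → ℝ}

/-- De Giorgi's coefficient `-∫ g ∇β`, the slope of the linear function by which `g` is
approximated in the region where the weight `β` lives. -/
noncomputable def deGiorgiCoeff (μ : Measure E) (g β : E → ℝ) : E :=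
  -∫ x, g x • gradient β x ∂μ

lemma integrable_smul_gradient [IsFiniteMeasureOnCompacts μ] (hg : Continuous g)
    (hβ : ContDiff ℝ 1 β) (hβ_supp : HasCompactSupport β) :
    Integrable (fun x => g x • gradient β x) μ := by
  have hcont : Continuous (gradient β) :=
    (InnerProductSpace.toDual ℝ E).symm.continuous.comp (hβ.continuous_fderiv one_ne_zero)
  have hsupp : HasCompactSupport (gradient β) :=
    (hβ_supp.fderiv ℝ).comp_left (g := (InnerProductSpace.toDual ℝ E).symm) (map_zero _)
  exact (hg.smul hcont).integrable_of_hasCompactSupport hsupp.smul_left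

variable [μ.IsAddHaarMeasure]

lemma inner_deGiorgiCoeff_eq_integral_lineDeriv {C : NNReal} (hg : LipschitzWith C g)
    (hβ : ContDiff ℝ 1 β) (hβ_supp : HasCompactSupport β) (v : E) :
    ⟪deGiorgiCoeff μ g β, v⟫ = ∫ x, lineDeriv ℝ g x v * β x ∂μ := by
  obtain ⟨D, hD⟩ := hβ.lipschitzWith_of_hasCompactSupport hβ_supp one_ne_zero
  have inner_integrand (x : E) : -⟪v, g x • gradient β x⟫ = lineDeriv ℝ β x (-v) * g x := by
    rw [lineDeriv_neg, (hβ.differentiable one_ne_zero x).lineDeriv_eq_fderiv, inner_smul_right,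
      real_inner_comm, inner_gradient_left]
    ring
  calc ⟪deGiorgiCoeff μ g β, v⟫
      = ∫ x, -⟪v, g x • gradient β x⟫ ∂μ := by
        rw [deGiorgiCoeff, inner_neg_left, real_inner_comm,
          ← integral_inner (integrable_smul_gradient hg.continuous hβ hβ_supp), integral_neg]
    _ = ∫ x, lineDeriv ℝ β x (-v) * g x ∂μ := by simp only [inner_integrand]
    _ = ∫ x, lineDeriv ℝ g x v * β x ∂μ := (hg.integral_lineDeriv_mul_eq hD hβ_supp v).symm

lemma inner_deGiorgiCoeff_le_of_forall_sub_le {C : NNReal} (hg : LipschitzWith C g)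
    (hconv : ConvexOn ℝ univ g) (hβ : IsMollifier μ β) {v : E} {c : ℝ}
    (hc : ∀ x ∈ support β, g (x + v) - g x ≤ c) :
    ⟪deGiorgiCoeff μ g β, v⟫ ≤ c := by
  have hβ_int : Integrable β μ :=
    hβ.contDiff.continuous.integrable_of_hasCompactSupport hβ.hasCompactSupport
  have hderiv_int : Integrable (fun x => lineDeriv ℝ g x v * β x) μ :=
    (hg.locallyIntegrable_lineDeriv v).integrable_smul_right_of_hasCompactSupport
      hβ.contDiff.continuous hβ.hasCompactSupport
  have hle : ∀ᵐ x ∂μ, lineDeriv ℝ g x v * β x ≤ c * β x := by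
    filter_upwards [hg.ae_lineDifferentiableAt v] with x hx
    by_cases hβx : β x = 0
    · simp [hβx]
    · exact mul_le_mul_of_nonneg_right
        ((lineDeriv_le_sub_of_convexOn hconv hx).trans (hc x hβx)) (hβ.nonneg x)
  calc ⟪deGiorgiCoeff μ g β, v⟫
      = ∫ x, lineDeriv ℝ g x v * β x ∂μ :=
        inner_deGiorgiCoeff_eq_integral_lineDeriv hg hβ.contDiff hβ.hasCompactSupport v
    _ ≤ ∫ x, c * β x ∂μ := integral_mono_ae hderiv_int (hβ_int.const_mul c) hle
    _ = c := by rw [integral_const_mul, hβ.integral_eq_one, mul_one]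

lemma le_inner_deGiorgiCoeff_of_forall_le_sub {C : NNReal} (hg : LipschitzWith C g)
    (hconv : ConvexOn ℝ univ g) (hβ : IsMollifier μ β) {v : E} {c : ℝ}
    (hc : ∀ x ∈ support β, c ≤ g x - g (x - v)) :
    c ≤ ⟪deGiorgiCoeff μ g β, v⟫ := by
  have h : ⟪deGiorgiCoeff μ g β, -v⟫ ≤ -c :=
    inner_deGiorgiCoeff_le_of_forall_sub_le hg hconv hβ fun x hx => by
      rw [← sub_eq_add_neg]
      linarith [hc x hx]
  rwa [inner_neg_right, neg_le_neg_iff] at h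

theorem deGiorgi_approximation_homogeneous_general (hg : IsSublinear g) {α : E → ℝ}
    (hα : IsMollifier μ α) {ι : Type*} {p : ι → E} (hp : DenseRange p) (ξ : E) :
    IsLUB {y | ∃ j : ℕ, 1 ≤ j ∧ ∃ i, y = ⟪deGiorgiCoeff μ g (rescaleAt α j (p i)), ξ⟫} (g ξ) := by
  obtain ⟨C, hC⟩ := hg.exists_lipschitzWith
  have hmoll (j : ℕ) (hj : 1 ≤ j) (i : ι) : IsMollifier μ (rescaleAt α j (p i)) :=
    hα.rescaleAt (Nat.cast_pos.2 hj) (p i)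
  constructor
  · rintro _ ⟨j, hj, i, rfl⟩
    exact inner_deGiorgiCoeff_le_of_forall_sub_le hC hg.convexOn (hmoll j hj i) fun x _ =>
      sub_le_iff_le_add'.2 (hg.map_add_le x ξ)
  · refine fun b hb => le_of_forall_lt_imp_le_of_dense fun c hc => ?_
    obtain ⟨j, hj, i, hsupp⟩ :=
      exists_support_rescaleAt_subset hp hα.hasCompactSupport (hg.setOf_lt_sub_mem_nhds hc)
    calc c ≤ ⟪deGiorgiCoeff μ g (rescaleAt α j (p i)), ξ⟫ :=
          le_inner_deGiorgiCoeff_of_forall_le_sub hC hg.convexOn (hmoll j hj i)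
            fun _ hx => (hsupp hx).le
      _ ≤ b := hb ⟨j, hj, i, rfl⟩

end DeGiorgi

lemma isLUB_image_max_of_le {γ : Type*} [LinearOrder γ] {s : Set γ} {a b : γ} (hs : IsLUB s a)
    (hba : b ≤ a) : IsLUB ((max · b) '' s) a :=
  ⟨forall_mem_image.2 fun _ hy => max_le (hs.1 hy) hba,
    fun _ hc => hs.2 fun _ hy => (le_max_left _ _).trans (hc (mem_image_of_mem _ hy))⟩

lemma denseRange_ratCast_euclideanSpace (ι : Type*) [Finite ι] :
    DenseRange fun q : ι → ℚ => (EuclideanSpace.equiv ι ℝ).symm fun i => (q i : ℝ) :=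
  (EuclideanSpace.equiv ι ℝ).symm.surjective.denseRange.comp
    (DenseRange.piMap fun _ => Rat.denseRange_cast) (EuclideanSpace.equiv ι ℝ).symm.continuous

/-- De Giorgi's approximation formula (2.4) for nonnegative functions, convex and
positively 1-homogeneous in the second variable (Lemma 2.4, second part). -/
theorem deGiorgi_approximation_homogeneous (d : ℕ) (hd : 1 ≤ d)
    (Ω : Set (EuclideanSpace ℝ (Fin d))) (hΩ : IsOpen Ω)
    (f : EuclideanSpace ℝ (Fin d) → EuclideanSpace ℝ (Fin d) → ℝ)
    (hf0 : ∀ x ∈ Ω, ∀ ξ, 0 ≤ f x ξ)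
    (hfconv : ∀ x ∈ Ω, ConvexOn ℝ Set.univ (f x))
    (hfhom : ∀ x ∈ Ω, ∀ (s : ℝ), 0 < s → ∀ ξ, f x (s • ξ) = s * f x ξ)
    (α : EuclideanSpace ℝ (Fin d) → ℝ)
    (hα1 : ContDiff ℝ 1 α) (hα2 : HasCompactSupport α)
    (hα3 : ∀ ξ, 0 ≤ α ξ) (hα4 : (∫ ξ, α ξ) = 1)
    (αjq : ℕ → (Fin d → ℚ) → EuclideanSpace ℝ (Fin d) → ℝ)
    (hαjq : ∀ j q ξ, αjq j q ξ =
      (j : ℝ) ^ d * α ((j : ℝ) •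
        ((EuclideanSpace.equiv (Fin d) ℝ).symm (fun i => (q i : ℝ)) - ξ)))
    (a : ℕ → (Fin d → ℚ) → EuclideanSpace ℝ (Fin d) → EuclideanSpace ℝ (Fin d))
    (ha : ∀ j q x, a j q x = - ∫ ξ, f x ξ • gradient (αjq j q) ξ) :
    ∀ x ∈ Ω, ∀ ξ, IsLUB
      {y : ℝ | ∃ j : ℕ, 1 ≤ j ∧ ∃ q : Fin d → ℚ,
        y = max ⟪a j q x, ξ⟫ 0} (f x ξ) := by
  intro x hx ξ
  obtain rfl : αjq = fun (j : ℕ) (q : Fin d → ℚ) =>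
      rescaleAt α j ((EuclideanSpace.equiv (Fin d) ℝ).symm fun i => (q i : ℝ)) := by
    ext j q η
    rw [hαjq, rescaleAt, finrank_euclideanSpace_fin]
  have hlub := isLUB_image_max_of_le (deGiorgi_approximation_homogeneous_general
    ⟨hfconv x hx, hfhom x hx⟩ ⟨hα1, hα2, hα3, hα4⟩ (denseRange_ratCast_euclideanSpace (Fin d)) ξ)
    (hf0 x hx ξ)
  simpa [image, ha, deGiorgiCoeff, eq_comm] using hlub
end

section
/- Let d ≥ 1 and let f : ℝ^d → [0,∞) be even, convex, positively 1-homogeneous (f(sξ) = s f(ξ) for all s > 0 and all ξ), and suppose there is c > 0 with f(ξ) ≥ c‖ξ‖ for all ξ ∈ ℝ^d. Define K := {z ∈ ℝ^d : ⟨z,ξ⟩ ≤ f(ξ) for every ξ ∈ ℝ^d}, and for h ∈ ℕ, h ≥ 1, define ϑ_h : ℝ → ℝ by ϑ_h(y) := (2/π) arctan(h|y|). Then for every r, t ∈ ℝ^d with r ≠ t and every ξ ∈ ℝ^d one has f(ξ) = sup { (ϑ_h(⟨r − p, b⟩) − ϑ_h(⟨t − p, b⟩)) · ⟨b, ξ⟩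 : h ∈ ℕ, h ≥ 1, b ∈ K, p ∈ ℝ^d }. -/
open scoped RealInnerProductSpace

/-!
An even, convex, positively homogeneous function is a seminorm `p`, and in finite dimension the
vectors `b ∈ K` are exactly the linear functionals `g ≤ p`.

Both values of the cutoff lie in `[0, 1]` and `|g ξ| ≤ p ξ`, so no product exceeds `p ξ`.
Conversely, placing the base point at `t` kills the second cutoff, and as `h → ∞` the product tends
to `g ξ` provided `g (r - t) ≠ 0`. By Hahn-Banach some `g ≤ p` attains `g ξ = p ξ`; if it vanishes
at `r - t`, move it slightly towards a functional norming `r - t`.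
-/

open Filter Set Topology

section Seminorm

variable {E : Type*} [AddCommGroup E] [Module ℝ E]

theorem add_le_of_convexOn_of_posHom {f : E → ℝ} (hconv : ConvexOn ℝ univ f)
    (hhom : ∀ s : ℝ, 0 < s → ∀ x, f (s • x) = s * f x) (x y : E) : f (x + y) ≤ f x + f y := by
  have midpoint : f ((1 / 2 : ℝ) • x + (1 / 2 : ℝ) • y) ≤ 1 / 2 * f x + 1 / 2 * f y :=
    hconv.2 (mem_univ x) (mem_univ y) (by norm_num) (by norm_num) (by norm_num)
  rw [← smul_add, hhom _ (by norm_num)] at midpoint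
  linarith

theorem map_smul_eq_abs_mul_of_even_of_posHom {f : E → ℝ} (heven : ∀ x, f (-x) = f x)
    (hhom : ∀ s : ℝ, 0 < s → ∀ x, f (s • x) = s * f x) (s : ℝ) (x : E) :
    f (s • x) = |s| * f x := by
  rcases lt_trichotomy s 0 with hs | rfl | hs
  · rw [← heven, ← neg_smul, hhom _ (neg_pos.2 hs), abs_of_neg hs]
  · have zero_eq : f 0 = 2 * f 0 := by simpa using hhom 2 two_pos 0
    rw [zero_smul, abs_zero, zero_mul]
    linarith
  · rw [hhom s hs, abs_of_pos hs]

theorem exists_seminorm_coe_eq {f : E → ℝ} (heven : ∀ x, f (-x) = f x)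
    (hconv : ConvexOn ℝ univ f) (hhom : ∀ s : ℝ, 0 < s → ∀ x, f (s • x) = s * f x) :
    ∃ p : Seminorm ℝ E, ⇑p = f :=
  ⟨Seminorm.of f (add_le_of_convexOn_of_posHom hconv hhom)
    (map_smul_eq_abs_mul_of_even_of_posHom heven hhom), rfl⟩

/-- The linear functionals dominated by the seminorm `p`. On a Euclidean space these are the
functionals `⟪b, ·⟫` with `b ∈ K`. Since `p` is even, `g ≤ p` already gives `|g| ≤ p`; continuity is
not built in. -/
def dominatedFunctionals (p : Seminorm ℝ E) : Set (Module.Dual ℝ E) :=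
  {g | ∀ x, g x ≤ p x}

theorem convex_dominatedFunctionals (p : Seminorm ℝ E) : Convex ℝ (dominatedFunctionals p) := by
  intro g₀ hg₀ g₁ hg₁ a b ha hb hab x
  calc a * g₀ x + b * g₁ x ≤ a * p x + b * p x := by gcongr; exacts [hg₀ x, hg₁ x]
    _ = p x := by rw [← add_mul, hab, one_mul]

theorem sub_mul_apply_le_of_mem_dominatedFunctionals {p : Seminorm ℝ E}
    {g : Module.Dual ℝ E} (hg : g ∈ dominatedFunctionals p) {u v : ℝ} (hu : u ∈ Icc 0 1)
    (hv : v ∈ Icc 0 1) (ξ : E) : (u - v) * g ξ ≤ p ξ := by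
  calc (u - v) * g ξ ≤ |u - v| * |g ξ| := (le_abs_self _).trans_eq (abs_mul ..)
    _ ≤ 1 * p ξ := by
      gcongr
      · exact abs_sub_le_of_nonneg_of_le hu.1 hu.2 hv.1 hv.2
      · exact p.abs_le_of_le hg ξ
    _ = p ξ := one_mul _

theorem exists_mem_dominatedFunctionals_apply_eq (p : Seminorm ℝ E) (x : E) :
    ∃ g ∈ dominatedFunctionals p, g x = p x := by
  have well_defined (c : ℝ) (hc : c • x = 0) : c • p x = 0 := by
    have abs_mul_eq : |c| * p x = 0 := by
      rw [← Real.norm_eq_abs, ← map_smul_eq_mul, hc, map_zero]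
    simpa using abs_mul_eq
  let φ : E →ₗ.[ℝ] ℝ := LinearPMap.mkSpanSingleton' x (p x) well_defined
  have φ_le (y : φ.domain) : φ y ≤ p y := by
    obtain ⟨_, hy⟩ := y
    obtain ⟨c, rfl⟩ := Submodule.mem_span_singleton.1 hy
    calc φ ⟨c • x, hy⟩ = c * p x := LinearPMap.mkSpanSingleton'_apply ..
      _ ≤ |c| * p x := by gcongr; exact le_abs_self c
      _ = p (c • x) := (map_smul_eq_mul p c x).symm
  obtain ⟨g, hgφ, hgp⟩ := Module.Dual.exists_extension_of_le_seminorm_real _ φ.toFun φ_le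
  refine ⟨g, fun y ↦ (le_abs_self _).trans (hgp y), ?_⟩
  exact (hgφ ⟨x, Submodule.mem_span_singleton_self x⟩).trans
    (LinearPMap.mkSpanSingleton'_apply_self ..)

theorem exists_mem_dominatedFunctionals_lt_apply_of_ne_zero (p : Seminorm ℝ E) {v ξ : E} {a : ℝ}
    (hv : p v ≠ 0) (ha : a < p ξ) : ∃ g ∈ dominatedFunctionals p, g v ≠ 0 ∧ a < g ξ := by
  obtain ⟨g₀, hg₀, hg₀ξ⟩ := exists_mem_dominatedFunctionals_apply_eq p ξ
  by_cases hg₀v : g₀ v = 0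
  · obtain ⟨g₁, hg₁, hg₁v⟩ := exists_mem_dominatedFunctionals_apply_eq p v
    have tendsto_zero :
        Tendsto (fun s : ℝ ↦ (1 - s) * g₀ ξ + s * g₁ ξ) (𝓝[>] 0) (𝓝 (p ξ)) := by
      have : Continuous fun s : ℝ ↦ (1 - s) * g₀ ξ + s * g₁ ξ := by fun_prop
      simpa [hg₀ξ] using (this.tendsto 0).mono_left nhdsWithin_le_nhds
    obtain ⟨s, hsξ, hs₀, hs₁⟩ :=
      ((tendsto_zero.eventually_const_lt ha).and (Ioo_mem_nhdsGT zero_lt_one)).exists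
    refine ⟨(1 - s) • g₀ + s • g₁, ?_, ?_, hsξ⟩
    · exact convex_dominatedFunctionals p hg₀ hg₁ (sub_nonneg.2 hs₁.le) hs₀.le
        (sub_add_cancel 1 s)
    · simpa [hg₀v, hg₁v] using ⟨hs₀.ne', hv⟩
  · exact ⟨g₀, hg₀, hg₀v, hg₀ξ ▸ ha⟩

end Seminorm

theorem innerₗ_surjective (E : Type*) [NormedAddCommGroup E] [InnerProductSpace ℝ E]
    [FiniteDimensional ℝ E] : Function.Surjective (innerₗ E) := by
  intro g
  refine ⟨(InnerProductSpace.toDual ℝ E).symm g.toContinuousLinearMap, LinearMap.ext fun x ↦ ?_⟩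
  exact InnerProductSpace.toDual_symm_apply

/-- The cutoff function `ϑ_h` of the representation formula: an even function with values in
`[0, 1]` which vanishes at `0` and increases to `1` elsewhere as `h → ∞`. -/
noncomputable def arctanCutoff (h : ℕ) (y : ℝ) : ℝ :=
  2 / Real.pi * Real.arctan (h * |y|)

theorem arctanCutoff_zero_right (h : ℕ) : arctanCutoff h 0 = 0 := by
  simp [arctanCutoff]

theorem arctanCutoff_mem_Icc (h : ℕ) (y : ℝ) : arctanCutoff h y ∈ Icc 0 1 := by
  constructor
  · have : 0 ≤ Real.arctan (h * |y|) := Real.arctan_nonneg.2 (by positivity)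
    unfold arctanCutoff
    positivity
  · calc 2 / Real.pi * Real.arctan (h * |y|) ≤ 2 / Real.pi * (Real.pi / 2) := by
          gcongr; exact (Real.arctan_lt_pi_div_two _).le
      _ = 1 := by field_simp

theorem tendsto_arctanCutoff_atTop {y : ℝ} (hy : y ≠ 0) :
    Tendsto (fun h ↦ arctanCutoff h y) atTop (𝓝 1) := by
  have tendsto_arctan : Tendsto (fun h : ℕ ↦ Real.arctan (h * |y|)) atTop (𝓝 (Real.pi / 2)) :=
    (Real.tendsto_arctan_atTop.mono_right nhdsWithin_le_nhds).comp
      (tendsto_natCast_atTop_atTop.atTop_mul_const (abs_pos.2 hy))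
  have pi_cancel : 2 / Real.pi * (Real.pi / 2) = 1 := by field_simp
  exact pi_cancel ▸ tendsto_arctan.const_mul (2 / Real.pi)

theorem representation_formula_truncated_fields_general {E : Type*} [AddCommGroup E] [Module ℝ E]
    (p : Seminorm ℝ E) {ϑ : ℕ → ℝ → ℝ} (hϑ_mem : ∀ h y, ϑ h y ∈ Icc 0 1) (hϑ_zero : ∀ h, ϑ h 0 = 0)
    (hϑ_lim : ∀ y, y ≠ 0 → Tendsto (fun h ↦ ϑ h y) atTop (𝓝 1)) {r t : E} (hrt : p (r - t) ≠ 0)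
    (ξ : E) :
    IsLUB {y : ℝ | ∃ h : ℕ, 1 ≤ h ∧ ∃ g ∈ dominatedFunctionals p, ∃ q : E,
      y = (ϑ h (g (r - q)) - ϑ h (g (t - q))) * g ξ} (p ξ) := by
  constructor
  · rintro _ ⟨h, -, g, hg, q, rfl⟩
    exact sub_mul_apply_le_of_mem_dominatedFunctionals hg (hϑ_mem ..) (hϑ_mem ..) ξ
  · intro M hM
    refine le_of_forall_lt fun a ha ↦ ?_
    obtain ⟨g, hg, hg_ne, hag⟩ := exists_mem_dominatedFunctionals_lt_apply_of_ne_zero p hrt ha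
    have tendsto_apply : Tendsto (fun h ↦ ϑ h (g (r - t)) * g ξ) atTop (𝓝 (g ξ)) := by
      simpa using (hϑ_lim _ hg_ne).mul_const (g ξ)
    have eventually_le : ∀ᶠ h in atTop, ϑ h (g (r - t)) * g ξ ≤ M := by
      filter_upwards [eventually_ge_atTop 1] with h hh
      exact hM ⟨h, hh, g, hg, t, by rw [sub_self, map_zero, hϑ_zero, sub_zero]⟩
    exact hag.trans_le (le_of_tendsto tendsto_apply eventually_le)

/-- The pointwise representation formula (4.8) underlying Proposition 4.4: the
supremum over the truncated fields `w ↦ ϑ_h(⟪w - p, b⟫) b`, `h ≥ 1`, `b ∈ K`,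
`p ∈ ℝ^d`, recovers `f ξ` as soon as `r ≠ t`. -/
theorem representation_formula_truncated_fields (d : ℕ) (hd : 1 ≤ d)
    (f : EuclideanSpace ℝ (Fin d) → ℝ)
    (hf0 : ∀ ξ, 0 ≤ f ξ)
    (heven : ∀ ξ, f (-ξ) = f ξ)
    (hconv : ConvexOn ℝ Set.univ f)
    (hhom : ∀ (s : ℝ), 0 < s → ∀ ξ, f (s • ξ) = s * f ξ)
    (c : ℝ) (hc : 0 < c) (hcoer : ∀ ξ, c * ‖ξ‖ ≤ f ξ)
    (K : Set (EuclideanSpace ℝ (Fin d)))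
    (hK : K = {z | ∀ ξ, ⟪z, ξ⟫ ≤ f ξ})
    (ϑ : ℕ → ℝ → ℝ)
    (hϑ : ∀ h y, ϑ h y = 2 / Real.pi * Real.arctan ((h : ℝ) * |y|)) :
    ∀ r t : EuclideanSpace ℝ (Fin d), r ≠ t → ∀ ξ : EuclideanSpace ℝ (Fin d),
      IsLUB {y : ℝ | ∃ h : ℕ, 1 ≤ h ∧ ∃ b ∈ K, ∃ p : EuclideanSpace ℝ (Fin d),
        y = (ϑ h ⟪r - p, b⟫ - ϑ h ⟪t - p, b⟫) * ⟪b, ξ⟫} (f ξ) := by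
  subst hK
  obtain rfl : ϑ = arctanCutoff := funext₂ hϑ
  intro r t hrt ξ
  have hf_sub : f (r - t) ≠ 0 :=
    ((mul_pos hc (norm_pos_iff.2 (sub_ne_zero.2 hrt))).trans_le (hcoer _)).ne'
  obtain ⟨p, rfl⟩ := exists_seminorm_coe_eq heven hconv hhom
  have hp_lub := representation_formula_truncated_fields_general p arctanCutoff_mem_Icc
    arctanCutoff_zero_right (fun _ ↦ tendsto_arctanCutoff_atTop) hf_sub ξ
  simpa only [dominatedFunctionals, (innerₗ_surjective _).exists, innerₗ_apply_apply,
    mem_ofPred_eq, real_inner_comm] using hp_lub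
end
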